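/- arXiv:1604.04272 — 4 statements merged into one kernel-verified Lean document; each statement's English description precedes it below -/
import Mathlib

section
/- Let 0 < α ≤ 1, let h > 0, let N be a positive integer, let D = {x_0, …, x_N} with x_j = a + jh, and let f, g : D → ℝ. Then the summation by parts formula holds: Σ_{k=0}^{N} g(x_k) · ₀Δ^α_k f(x_k) = Σ_{k=0}^{N} f(x_k) · ₖΔ^α_N g(x_k). -/
/-!
Both sides expand to `h ^ (-α)` times a double sum of `acoef α i * f m * g k` over the triples with
`m + i = k ≤ N`: the left side is indexed by `(k, i)` with `i ≤ k`, the right side by `(m, i)` with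
`i ≤ N - m`. The identity is the change of summation variable `m = k - i`.
-/

/-- The Grünwald–Letnikov coefficients `a_i^{(α)} = (-1)^i α(α-1)⋯(α-i+1)/i!`
(with `a_0^{(α)} = 1`). -/
noncomputable def acoef (α : ℝ) (i : ℕ) : ℝ :=
  (-1 : ℝ) ^ i * (∏ j ∈ Finset.range i, (α - (j : ℝ))) / (Nat.factorial i)

/-- The backward fractional difference of order `α` on a uniform mesh with step `h`,
of a mesh function `f` (where `f k` stands for `f(x_k)`, `x_k = a + k h`):
`₀Δ^α_k f(x_k) = h^{-α} Σ_{i=0}^{k} a_i^{(α)} f(x_{k-i})`. -/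
noncomputable def glBackDiff (α h : ℝ) (f : ℕ → ℝ) (k : ℕ) : ℝ :=
  h ^ (-α) * ∑ i ∈ Finset.range (k + 1), acoef α i * f (k - i)

/-- The forward fractional difference of order `α` on a uniform mesh with step `h`
and `N + 1` mesh points: `ₖΔ^α_N f(x_k) = h^{-α} Σ_{i=0}^{N-k} a_i^{(α)} f(x_{k+i})`. -/
noncomputable def glFwdDiff (α h : ℝ) (N : ℕ) (f : ℕ → ℝ) (k : ℕ) : ℝ :=
  h ^ (-α) * ∑ i ∈ Finset.range (N - k + 1), acoef α i * f (k + i)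

/-- summation by parts for fractional differences:
`Σ_{k=0}^{N} g(x_k) ₀Δ^α_k f(x_k) = Σ_{k=0}^{N} f(x_k) ₖΔ^α_N g(x_k)`. -/
theorem summation_by_parts (a : ℝ) (α h : ℝ) (hα0 : 0 < α) (hα1 : α ≤ 1) (hh : 0 < h)
    (N : ℕ) (hN : 0 < N) (f g : ℕ → ℝ) :
    ∑ k ∈ Finset.range (N + 1), g k * glBackDiff α h f k
      = ∑ k ∈ Finset.range (N + 1), f k * glFwdDiff α h N g k := by
  simp only [glBackDiff, glFwdDiff, Finset.mul_sum, Finset.sum_sigma']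
  -- The pair `(k, i)` with `i ≤ k ≤ N` corresponds to `(k - i, i)`, where `i ≤ N - (k - i)`.
  refine Finset.sum_bij' (fun p _ => ⟨p.1 - p.2, p.2⟩) (fun p _ => ⟨p.1 + p.2, p.2⟩)
    ?_ ?_ ?_ ?_ ?_
  · rintro ⟨k, i⟩ hp
    simp only [Finset.mem_sigma, Finset.mem_range] at hp ⊢
    omega
  · rintro ⟨k, i⟩ hp
    simp only [Finset.mem_sigma, Finset.mem_range] at hp ⊢
    omega
  · rintro ⟨k, i⟩ hp
    simp only [Finset.mem_sigma, Finset.mem_range] at hp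
    have hki : k - i + i = k := by omega
    simp only [hki]
  · rintro ⟨k, i⟩ hp
    simp only [Nat.add_sub_cancel]
  · rintro ⟨k, i⟩ hp
    simp only [Finset.mem_sigma, Finset.mem_range] at hp
    have hki : k - i + i = k := by omega
    simp only [hki]
    ring
end

section
/- Let 0 < α ≤ 1, let h > 0, let N be a positive integer, let D = {x_0, …, x_N} with x_j = a + jh, and let f, g : D → ℝ. If f(x_0) = f(x_N) = 0 or g(x_0) = g(x_N) = 0, then Σ_{k=1}^{N} g(x_k) · ₀Δ^α_k f(x_k) = Σ_{k=0}^{N-1} f(x_k) · ₖΔ^α_N g(x_k). -/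
/-- Summation by parts over the full mesh, with no boundary condition. -/
lemma sum_mul_glBackDiff (α h : ℝ) (N : ℕ) (f g : ℕ → ℝ) :
    ∑ k ∈ Finset.range (N + 1), g k * glBackDiff α h f k
      = ∑ k ∈ Finset.range (N + 1), f k * glFwdDiff α h N g k := by
  simp only [glBackDiff, glFwdDiff, Finset.mul_sum]
  rw [Finset.sum_sigma', Finset.sum_sigma']
  refine Finset.sum_bij' (fun p _ => ⟨p.1 - p.2, p.2⟩) (fun p _ => ⟨p.1 + p.2, p.2⟩)
    ?_ ?_ ?_ ?_ ?_
  · rintro ⟨k, i⟩ hp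
    simp only [Finset.mem_sigma, Finset.mem_range] at hp ⊢
    omega
  · rintro ⟨k, i⟩ hp
    simp only [Finset.mem_sigma, Finset.mem_range] at hp ⊢
    omega
  · rintro ⟨k, i⟩ hp
    simp only [Finset.mem_sigma, Finset.mem_range] at hp
    simp only [Nat.sub_add_cancel (Nat.le_of_lt_succ hp.2)]
  · rintro ⟨k, i⟩ _
    simp only [Nat.add_sub_cancel]
  · rintro ⟨k, i⟩ hp
    simp only [Finset.mem_sigma, Finset.mem_range] at hp
    simp only [Nat.sub_add_cancel (Nat.le_of_lt_succ hp.2)]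
    ring

/-- summation by parts with boundary conditions: if
`f(x_0) = f(x_N) = 0` or `g(x_0) = g(x_N) = 0`, then
`Σ_{k=1}^{N} g(x_k) ₀Δ^α_k f(x_k) = Σ_{k=0}^{N-1} f(x_k) ₖΔ^α_N g(x_k)`. -/
theorem summation_by_parts_bc (a : ℝ) (α h : ℝ) (hα0 : 0 < α) (hα1 : α ≤ 1) (hh : 0 < h)
    (N : ℕ) (hN : 0 < N) (f g : ℕ → ℝ)
    (hbc : (f 0 = 0 ∧ f N = 0) ∨ (g 0 = 0 ∧ g N = 0)) :
    ∑ k ∈ Finset.Icc 1 N, g k * glBackDiff α h f k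
      = ∑ k ∈ Finset.range N, f k * glFwdDiff α h N g k := by
  have hfull := sum_mul_glBackDiff α h N f g
  have hleft : g 0 * glBackDiff α h f 0 = 0 := by
    rcases hbc with ⟨h0, _⟩ | ⟨h0, _⟩ <;> simp [glBackDiff, h0]
  have hright : f N * glFwdDiff α h N g N = 0 := by
    rcases hbc with ⟨_, h0⟩ | ⟨_, h0⟩ <;> simp [glFwdDiff, h0]
  rw [Finset.sum_range_succ (fun k => f k * glFwdDiff α h N g k), hright, add_zero,
    Finset.sum_range_eq_add_Ico _ (Nat.succ_pos N), hleft, zero_add] at hfull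
  exact hfull
end

section
/- Let 0 < α ≤ 1, let h > 0, let N ≥ 2 be an integer, let x_j = a + jh (j = 0,…,N), and let p, q, r be real-valued functions on the mesh with p(x_i) > 0 and r(x_i) > 0 for all i. If y^i and y^j are eigenfunctions of the discrete fractional Sturm–Liouville problem ₖΔ^α_N(p(x_k)·₀Δ^α_k y(x_k)) + q(x_k) y(x_k) = λ r(x_k) y(x_k), k = 1,…,N−1, with y(x_0) = y(x_N) = 0, corresponding to distinct eigenvalues λ_i ≠ λ_j, then they are orthogonal with respect to the weight r: ⟨y^i, y^j⟩_r := Σ_{k=1}^{N−1} r(x_k) y^i(x_k) y^j(x_k) = 0. -/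
/-- `y` satisfies the discrete fractional Sturm–Liouville equation
`ₖΔ^α_N (p(x_k) ₀Δ^α_k y(x_k)) + q(x_k) y(x_k) = λ r(x_k) y(x_k)` for `k = 1, …, N-1`. -/
def SLSolves (α h : ℝ) (N : ℕ) (p q r : ℕ → ℝ) (lam : ℝ) (y : ℕ → ℝ) : Prop :=
  ∀ k, 1 ≤ k → k ≤ N - 1 →
    glFwdDiff α h N (fun j => p j * glBackDiff α h y j) k + q k * y k = lam * (r k * y k)

/-- `(lam, y)` is an eigenpair of the discrete fractional Sturm–Liouville problem:
`y` is a nontrivial mesh function satisfying the equation together with the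
boundary conditions `y(x_0) = y(x_N) = 0`. -/
def IsSLEigenpair (α h : ℝ) (N : ℕ) (p q r : ℕ → ℝ) (lam : ℝ) (y : ℕ → ℝ) : Prop :=
  y 0 = 0 ∧ y N = 0 ∧ (∃ k ≤ N, y k ≠ 0) ∧ SLSolves α h N p q r lam y

/-- The functional `J[y] = Σ_{k=1}^{N} [p(x_k) (₀Δ^α_k y(x_k))² + q(x_k) y(x_k)²]`. -/
noncomputable def slJ (α h : ℝ) (N : ℕ) (p q : ℕ → ℝ) (y : ℕ → ℝ) : ℝ :=
  ∑ k ∈ Finset.Icc 1 N, (p k * (glBackDiff α h y k) ^ 2 + q k * (y k) ^ 2)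

/-- The functional `I[y] = Σ_{k=1}^{N} r(x_k) y(x_k)²`. -/
noncomputable def slI (N : ℕ) (r : ℕ → ℝ) (y : ℕ → ℝ) : ℝ :=
  ∑ k ∈ Finset.Icc 1 N, r k * (y k) ^ 2

/-- Summation by parts: the forward difference is the transpose of the backward difference on
the full mesh `0, …, N`. Both sides are `h ^ (-α)` times the sum of `acoef α i * g k * f (k + i)` over
`k + i ≤ N`. -/
theorem sum_mul_glFwdDiff (α h : ℝ) (N : ℕ) (f g : ℕ → ℝ) :
    ∑ k ∈ Finset.range (N + 1), g k * glFwdDiff α h N f k =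
      ∑ k ∈ Finset.range (N + 1), f k * glBackDiff α h g k := by
  simp only [glFwdDiff, glBackDiff, Finset.mul_sum]
  rw [Finset.sum_sigma', Finset.sum_sigma']
  refine Finset.sum_bij' (fun x _ => ⟨x.1 + x.2, x.2⟩) (fun x _ => ⟨x.1 - x.2, x.2⟩)
    ?_ ?_ ?_ ?_ ?_
  · rintro ⟨k, i⟩ hx
    simp only [Finset.mem_sigma, Finset.mem_range] at hx ⊢
    omega
  · rintro ⟨k, i⟩ hx
    simp only [Finset.mem_sigma, Finset.mem_range] at hx ⊢
    omega
  · rintro ⟨k, i⟩ hx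
    simp
  · rintro ⟨k, i⟩ hx
    simp only [Finset.mem_sigma, Finset.mem_range] at hx
    simp only [Sigma.mk.injEq, heq_eq_eq, and_true]
    omega
  · rintro ⟨k, i⟩ hx
    simp only [Nat.add_sub_cancel]
    ring

/-- A sum over the whole mesh reduces to the interior points when the summand vanishes at both
endpoints. -/
theorem sum_range_eq_sum_interior (N : ℕ) (F : ℕ → ℝ) (h0 : F 0 = 0) (hN : F N = 0) :
    ∑ k ∈ Finset.range (N + 1), F k = ∑ k ∈ Finset.Icc 1 (N - 1), F k := by
  symm
  apply Finset.sum_subset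
  · intro k hk
    simp only [Finset.mem_Icc, Finset.mem_range] at hk ⊢
    omega
  · intro k hk hk'
    simp only [Finset.mem_Icc, Finset.mem_range] at hk hk'
    rcases (show k = 0 ∨ k = N by omega) with rfl | rfl <;> assumption

/-- Weak form of the equation: testing a solution `y` against any `z` vanishing at the
endpoints. -/
theorem SLSolves.weak_form {α h : ℝ} {N : ℕ} {p q r : ℕ → ℝ} {lam : ℝ} {y z : ℕ → ℝ}
    (hy : SLSolves α h N p q r lam y) (hz0 : z 0 = 0) (hzN : z N = 0) :
    lam * ∑ k ∈ Finset.Icc 1 (N - 1), r k * y k * z k =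
      ∑ k ∈ Finset.range (N + 1), p k * glBackDiff α h y k * glBackDiff α h z k +
        ∑ k ∈ Finset.Icc 1 (N - 1), q k * y k * z k := by
  rw [← sum_mul_glFwdDiff α h N (fun k => p k * glBackDiff α h y k) z,
    sum_range_eq_sum_interior _ _ (by simp [hz0]) (by simp [hzN]), ← Finset.sum_add_distrib,
    Finset.mul_sum]
  refine Finset.sum_congr rfl fun k hk => ?_
  rw [Finset.mem_Icc] at hk
  linear_combination -z k * hy k hk.1 hk.2

/-- eigenfunctions of the discrete fractional Sturm–Liouville problem
corresponding to distinct eigenvalues are orthogonal with respect to the weight `r`. -/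
theorem discrete_SL_orthogonality (a : ℝ) (α h : ℝ) (hα0 : 0 < α) (hα1 : α ≤ 1)
    (hh : 0 < h) (N : ℕ) (hN : 2 ≤ N) (p q r : ℕ → ℝ)
    (hp : ∀ i ≤ N, 0 < p i) (hr : ∀ i ≤ N, 0 < r i)
    (lami lamj : ℝ) (yi yj : ℕ → ℝ)
    (hyi : IsSLEigenpair α h N p q r lami yi)
    (hyj : IsSLEigenpair α h N p q r lamj yj)
    (hne : lami ≠ lamj) :
    ∑ k ∈ Finset.Icc 1 (N - 1), r k * yi k * yj k = 0 := by
  obtain ⟨hi0, hiN, -, hi⟩ := hyi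
  obtain ⟨hj0, hjN, -, hj⟩ := hyj
  have h1 := hi.weak_form hj0 hjN
  have h2 := hj.weak_form hi0 hiN
  simp only [mul_right_comm _ (yj _) (yi _),
    mul_right_comm _ (glBackDiff α h yj _) (glBackDiff α h yi _)] at h2
  exact (mul_eq_mul_right_iff.mp (h1.trans h2.symm)).resolve_left hne
end

section
/- Let 0 < α ≤ 1, let h > 0, let N ≥ 2 be an integer, let x_j = a + jh (j = 0,…,N), and let p, q, r be real-valued mesh functions with p(x_i) > 0 and r(x_i) > 0 for all i. Suppose a nontrivial mesh function y with y(x_0) = y(x_N) = 0 is a critical point of the Rayleigh quotient R[y] = J[y]/I[y], in the sense that for every mesh function η with η(x_0) = η(x_N) = 0 one has d/dh R[y + hη]|_{h=0} = 0. Then y satisfies ₖΔ^α_N(p(x_k)·₀Δ^α_k y(x_k)) + q(x_k) y(x_k) − λ r(x_k) y(x_k) = 0 for k = 1,…,N−1, where λ = R[y]; in particular R[y] is an eigenvalue of the discrete fractional Sturm–Liouville problem. -/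
lemma glBackDiff_add_mul (α h : ℝ) (y η : ℕ → ℝ) (t : ℝ) (k : ℕ) :
    glBackDiff α h (fun j => y j + t * η j) k
      = glBackDiff α h y k + t * glBackDiff α h η k := by
  simp only [glBackDiff, mul_add, Finset.sum_add_distrib, Finset.mul_sum]
  congr 1
  exact Finset.sum_congr rfl fun i _ => by ring

lemma hasDerivAt_add_mul_sq (u v : ℝ) :
    HasDerivAt (fun t : ℝ => (u + t * v) ^ 2) (2 * (u * v)) 0 := by
  have h1 : HasDerivAt (fun t : ℝ => u + t * v) v 0 := by
    simpa using ((hasDerivAt_id (0 : ℝ)).mul_const v).const_add u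
  refine (h1.fun_pow 2).congr_deriv ?_
  norm_num
  ring

lemma hasDerivAt_slJ (α h : ℝ) (N : ℕ) (p q y η : ℕ → ℝ) :
    HasDerivAt (fun t : ℝ => slJ α h N p q (fun k => y k + t * η k))
      (∑ k ∈ Finset.Icc 1 N, (p k * (2 * (glBackDiff α h y k * glBackDiff α h η k))
        + q k * (2 * (y k * η k)))) 0 := by
  simp only [slJ, glBackDiff_add_mul]
  exact HasDerivAt.fun_sum fun k _ =>
    ((hasDerivAt_add_mul_sq _ _).const_mul _).add ((hasDerivAt_add_mul_sq _ _).const_mul _)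

lemma hasDerivAt_slI (N : ℕ) (r y η : ℕ → ℝ) :
    HasDerivAt (fun t : ℝ => slI N r (fun k => y k + t * η k))
      (∑ k ∈ Finset.Icc 1 N, r k * (2 * (y k * η k))) 0 := by
  simp only [slI]
  exact HasDerivAt.fun_sum fun k _ => (hasDerivAt_add_mul_sq _ _).const_mul _

lemma slI_pos (N : ℕ) (r y : ℕ → ℝ) (hr : ∀ i ≤ N, 0 < r i) (hy0 : y 0 = 0)
    (hynz : ∃ k ≤ N, y k ≠ 0) : 0 < slI N r y := by
  obtain ⟨k, hk, hyk⟩ := hynz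
  have hk0 : k ≠ 0 := by rintro rfl; exact hyk hy0
  refine Finset.sum_pos' (fun i hi => ?_) ⟨k, Finset.mem_Icc.2 ⟨by omega, hk⟩, ?_⟩
  · exact mul_nonneg (hr i (Finset.mem_Icc.1 hi).2).le (sq_nonneg _)
  · exact mul_pos (hr k hk) (by positivity)

lemma glBackDiff_single (α h : ℝ) (k j : ℕ) :
    glBackDiff α h (Pi.single k 1) j = if k ≤ j then h ^ (-α) * acoef α (j - k) else 0 := by
  unfold glBackDiff
  split_ifs with hkj
  · rw [Finset.sum_eq_single (j - k)]
    · rw [Nat.sub_sub_self hkj]; simp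
    · intro i hi hne
      rw [Finset.mem_range] at hi
      rw [Pi.single_eq_of_ne (by omega), mul_zero]
    · intro hn
      exact absurd (Finset.mem_range.2 (by omega)) hn
  · rw [Finset.sum_eq_zero, mul_zero]
    intro i _
    rw [Pi.single_eq_of_ne (by omega), mul_zero]

/-- Discrete fractional summation by parts, tested against the unit mesh function at `k`. -/
lemma sum_mul_glBackDiff_single (α h : ℝ) (N : ℕ) (g : ℕ → ℝ) (k : ℕ) (hk : 1 ≤ k)
    (hkN : k ≤ N) :
    ∑ j ∈ Finset.Icc 1 N, g j * glBackDiff α h (Pi.single k 1) j = glFwdDiff α h N g k := by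
  simp only [glBackDiff_single, mul_ite, mul_zero]
  rw [← Finset.sum_filter, glFwdDiff, Finset.mul_sum]
  refine Finset.sum_nbij' (fun j => j - k) (fun i => k + i) ?_ ?_ ?_ ?_ ?_
  · intro j hj
    simp only [Finset.mem_filter, Finset.mem_Icc, Finset.mem_range] at *
    omega
  · intro j hj
    simp only [Finset.mem_filter, Finset.mem_Icc, Finset.mem_range] at *
    omega
  · intro j hj
    simp only [Finset.mem_filter, Finset.mem_Icc] at *
    omega
  · intro j hj
    simp
  · intro j hj
    simp only [Finset.mem_filter, Finset.mem_Icc] at hj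
    rw [Nat.add_sub_cancel' hj.2]
    ring

lemma sum_mul_single (N : ℕ) (c y : ℕ → ℝ) (k : ℕ) (hk : 1 ≤ k) (hkN : k ≤ N) :
    ∑ j ∈ Finset.Icc 1 N, c j * (2 * (y j * (Pi.single k 1 : ℕ → ℝ) j)) = 2 * (c k * y k) := by
  rw [Finset.sum_eq_single k]
  · simp; ring
  · intro j _ hj
    simp [Pi.single_eq_of_ne hj]
  · intro hn
    exact absurd (Finset.mem_Icc.2 ⟨hk, hkN⟩) hn

/-- if a nontrivial mesh function `y` with `y(x_0) = y(x_N) = 0` is a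
critical point of the Rayleigh quotient `R[y] = J[y]/I[y]`, i.e. for every mesh
function `η` vanishing at `x_0` and `x_N` one has `d/dt R[y + tη]|_{t=0} = 0`, then
`y` satisfies the discrete fractional Sturm–Liouville equation with `λ = R[y]`;
in particular `R[y]` is an eigenvalue of the problem. -/
theorem discrete_SL_rayleigh_critical (a : ℝ) (α h : ℝ)
    (hα0 : 0 < α) (hα1 : α ≤ 1) (hh : 0 < h) (N : ℕ) (hN : 2 ≤ N) (p q r : ℕ → ℝ)
    (hp : ∀ i ≤ N, 0 < p i) (hr : ∀ i ≤ N, 0 < r i)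
    (y : ℕ → ℝ) (hy0 : y 0 = 0) (hyN : y N = 0) (hynz : ∃ k ≤ N, y k ≠ 0)
    (hcrit : ∀ η : ℕ → ℝ, η 0 = 0 → η N = 0 →
      deriv (fun t : ℝ =>
        slJ α h N p q (fun k => y k + t * η k) / slI N r (fun k => y k + t * η k)) 0 = 0) :
    (∀ k, 1 ≤ k → k ≤ N - 1 →
      glFwdDiff α h N (fun j => p j * glBackDiff α h y j) k + q k * y k
        - (slJ α h N p q y / slI N r y) * (r k * y k) = 0) ∧
    ∃ w, IsSLEigenpair α h N p q r (slJ α h N p q y / slI N r y) w := by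
  have hI : 0 < slI N r y := slI_pos N r y hr hy0 hynz
  have key : ∀ k, 1 ≤ k → k ≤ N - 1 →
      glFwdDiff α h N (fun j => p j * glBackDiff α h y j) k + q k * y k
        - (slJ α h N p q y / slI N r y) * (r k * y k) = 0 := by
    intro k hk hkN
    have hkN' : k ≤ N := by omega
    have hc := hcrit (Pi.single k 1) (Pi.single_eq_of_ne (by omega) _)
      (Pi.single_eq_of_ne (by omega) _)
    have hJ' := hasDerivAt_slJ α h N p q y (Pi.single k 1)
    have hI' := hasDerivAt_slI N r y (Pi.single k 1)
    rw [sum_mul_single N r y k hk hkN'] at hI'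
    rw [Finset.sum_add_distrib, sum_mul_single N q y k hk hkN'] at hJ'
    have hsum : ∑ j ∈ Finset.Icc 1 N,
        p j * (2 * (glBackDiff α h y j * glBackDiff α h (Pi.single k 1) j))
        = 2 * glFwdDiff α h N (fun j => p j * glBackDiff α h y j) k := by
      rw [← sum_mul_glBackDiff_single α h N _ k hk hkN', Finset.mul_sum]
      exact Finset.sum_congr rfl fun j _ => by ring
    rw [hsum] at hJ'
    have hd := (hJ'.fun_div hI' (by simpa using hI.ne')).deriv
    rw [hc] at hd
    simp only [zero_mul, add_zero] at hd
    have hne := hI.ne'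
    field_simp at hd ⊢
    linarith
  exact ⟨key, y, hy0, hyN, hynz, fun k hk hkN => sub_eq_zero.1 (key k hk hkN)⟩
end
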